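/- Let P = (X, ≺) be a poset on |X| = n elements, let A_P = (X, L) be the corresponding poset antimatroid, and let ω : X → ℝ_{>0} be a positive weight function satisfying the cover monotonicity property (CM). Then for every integer 1 ≤ k < n: L_ω(k)² ≥ L_ω(k−1)·L_ω(k+1). -/

import Mathlib

open scoped Classical BigOperators

noncomputable section

variable {X : Type*} [Fintype X] [DecidableEq X] [PartialOrder X]

/-- A feasible word of the poset antimatroid of `(X, ≺)`: a simple word such that every
letter is preceded by all elements below it in the poset. -/
def FeasibleWord (α : List X) : Prop :=
  α.Nodup ∧ ∀ (l₁ l₂ : List X) (x : X), α = l₁ ++ x :: l₂ → ∀ y : X, y < x → y ∈ l₁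

/-- All words of length `k` over the alphabet `X`. -/
def wordsLen (X : Type*) [Fintype X] [DecidableEq X] (k : ℕ) : Finset (List X) :=
  (Finset.univ : Finset (Fin k → X)).image List.ofFn

/-- The weighted count `L_ω(k) = Σ_{α ∈ L_k} Π_{x ∈ α} ω(x)` over feasible words of
length `k`. -/
def Lw (ω : X → ℝ) (k : ℕ) : ℝ :=
  ∑ α ∈ (wordsLen X k).filter (fun α => FeasibleWord α), (α.map ω).prod

/-- The set `Cov(x)` of elements covering `x` in the poset. -/
def covers (x : X) : Finset X := Finset.univ.filter (fun y => x ⋖ y)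


section Generic
open Matrix
variable {ι : Type*} [Fintype ι] [DecidableEq ι]

/-- Hyperbolicity (reverse Cauchy–Schwarz) of a real matrix. -/
def Hyp (M : Matrix ι ι ℝ) : Prop :=
  ∀ v w : ι → ℝ, 0 < w ⬝ᵥ M *ᵥ w →
    (v ⬝ᵥ M *ᵥ v) * (w ⬝ᵥ M *ᵥ w) ≤ (v ⬝ᵥ M *ᵥ w) ^ 2

lemma form_symm (M : Matrix ι ι ℝ) (hM : ∀ i j, M i j = M j i) (v w : ι → ℝ) :
    v ⬝ᵥ M *ᵥ w = w ⬝ᵥ M *ᵥ v := by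
  simp only [dotProduct, mulVec, Finset.mul_sum]
  rw [Finset.sum_comm]
  refine Finset.sum_congr rfl fun i _ => Finset.sum_congr rfl fun j _ => ?_
  rw [hM j i]; ring

lemma hyp_of_orth (M : Matrix ι ι ℝ) (hM : ∀ i j, M i j = M j i) (h : ι → ℝ)
    (H : ∀ v : ι → ℝ, v ⬝ᵥ M *ᵥ h = 0 → v ⬝ᵥ M *ᵥ v ≤ 0) : Hyp M := by
  intro v w hw
  set p := w ⬝ᵥ M *ᵥ h with hp
  set q := v ⬝ᵥ M *ᵥ h with hq
  have hp0 : p ≠ 0 := fun h0 => absurd (H w h0) (not_le.mpr hw)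
  have h1 := H (p • v - q • w) (by
    simp only [sub_dotProduct, smul_dotProduct, ← hp, ← hq, smul_eq_mul]; ring)
  have h2 : (p • v - q • w) ⬝ᵥ M *ᵥ (p • v - q • w) =
      p ^ 2 * (v ⬝ᵥ M *ᵥ v) - 2 * p * q * (v ⬝ᵥ M *ᵥ w) + q ^ 2 * (w ⬝ᵥ M *ᵥ w) := by
    simp only [sub_dotProduct, smul_dotProduct, mulVec_sub, mulVec_smul, dotProduct_sub,
      dotProduct_smul, smul_eq_mul]
    rw [form_symm M hM w v]; ring
  rw [h2] at h1
  set a := v ⬝ᵥ M *ᵥ v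
  set b := w ⬝ᵥ M *ᵥ w
  set e := v ⬝ᵥ M *ᵥ w
  have hpp : 0 < p ^ 2 := by positivity
  have : p ^ 2 * (a * b - e ^ 2) ≤ 0 := by
    have := mul_nonpos_of_nonpos_of_nonneg h1 hw.le
    nlinarith [sq_nonneg (q * b - p * e)]
  by_contra hc
  push Not at hc
  nlinarith [mul_pos hpp (sub_pos.mpr hc)]

/-- The Perron-type identity. -/
lemma perron_id (M : Matrix ι ι ℝ) (hM : ∀ i j, M i j = M j i) (h : ι → ℝ) (hh : ∀ i, 0 < h i)
    (v : ι → ℝ) :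
    ∑ i, ∑ j, M i j * h i * h j * (v i / h i - v j / h j) ^ 2 =
      2 * (∑ i, (M *ᵥ h) i / h i * v i ^ 2 - v ⬝ᵥ M *ᵥ v) := by
  have e1 : ∑ i, (M *ᵥ h) i / h i * v i ^ 2 = ∑ i, ∑ j, M i j * h j / h i * v i ^ 2 := by
    simp only [mulVec, dotProduct, Finset.sum_div, Finset.sum_mul]
  have e2 : ∑ i, (M *ᵥ h) i / h i * v i ^ 2 = ∑ i, ∑ j, M i j * h i / h j * v j ^ 2 := by
    rw [e1, Finset.sum_comm]
    refine Finset.sum_congr rfl fun i _ => Finset.sum_congr rfl fun j _ => ?_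
    rw [hM j i]
  have e3 : v ⬝ᵥ M *ᵥ v = ∑ i, ∑ j, M i j * v i * v j := by
    simp only [mulVec, dotProduct, Finset.mul_sum]
    refine Finset.sum_congr rfl fun i _ => Finset.sum_congr rfl fun j _ => ?_
    ring
  rw [mul_sub, two_mul]
  nth_rewrite 1 [e1]
  rw [e2, e3, Finset.mul_sum, ← Finset.sum_add_distrib, ← Finset.sum_sub_distrib]
  refine Finset.sum_congr rfl fun i _ => ?_
  rw [Finset.mul_sum, ← Finset.sum_add_distrib, ← Finset.sum_sub_distrib]
  refine Finset.sum_congr rfl fun j _ => ?_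
  have := (hh i).ne'
  have := (hh j).ne'
  field_simp
  ring

lemma orth_of_pull (M : Matrix ι ι ℝ) (hM : ∀ i j, M i j = M j i) (hn : ∀ i j, 0 ≤ M i j)
    (h : ι → ℝ) (hh : ∀ i, 0 < h i) (o : ι) (hconn : ∀ i, M i o = 0 → i ≠ o → ∀ j, M i j = 0)
    (hpull : ∀ v : ι → ℝ, v ⬝ᵥ M *ᵥ v ≤ ∑ i, h i * ((M *ᵥ v) i) ^ 2 / (M *ᵥ h) i)
    (v : ι → ℝ) (hv : v ⬝ᵥ M *ᵥ h = 0) : v ⬝ᵥ M *ᵥ v ≤ 0 := by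
  set d : ι → ℝ := fun i => (M *ᵥ h) i / h i with hd
  have hMh : ∀ i, 0 ≤ (M *ᵥ h) i := fun i =>
    Finset.sum_nonneg fun j _ => mul_nonneg (hn i j) (hh j).le
  have hd0 : ∀ i, 0 ≤ d i := fun i => div_nonneg (hMh i) (hh i).le
  have hz : ∀ i, d i = 0 → ∀ j, M i j = 0 := by
    intro i hi j
    have h1 : (M *ᵥ h) i = 0 := by
      rcases div_eq_zero_iff.mp hi with h | h
      · exact h
      · exact absurd h (hh i).ne'
    have h2 := (Finset.sum_eq_zero_iff_of_nonneg
      (fun j _ => mul_nonneg (hn i j) (hh j).le)).mp h1 j (Finset.mem_univ j)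
    rcases mul_eq_zero.mp h2 with h | h
    · exact h
    · exact absurd h (hh j).ne'
  set s : ι → ℝ := fun i => Real.sqrt (d i) with hs
  have hss : ∀ i, s i * s i = d i := fun i => Real.mul_self_sqrt (hd0 i)
  have hs0 : ∀ i, s i = 0 → d i = 0 := fun i hi => by rw [← hss, hi, zero_mul]
  set S : Matrix ι ι ℝ := Matrix.of fun i j => M i j / (s i * s j) with hSdef
  have hSM : ∀ i j, M i j = s i * S i j * s j := by
    intro i j
    by_cases hi : s i = 0
    · rw [hz i (hs0 i hi), hi]; ring
    by_cases hj : s j = 0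
    · rw [hM, hz j (hs0 j hj), hj]; ring
    simp only [hSdef, Matrix.of_apply]
    field_simp
  have hS : S.IsHermitian := by
    ext i j
    simp only [hSdef, Matrix.conjTranspose_apply, Matrix.of_apply, star_trivial]
    rw [hM j i, mul_comm (s j)]
  have hSs : ∀ i j, S i j = S j i := by
    intro i j
    simp only [hSdef, Matrix.of_apply]
    rw [hM j i, mul_comm (s j)]
  -- eigenvector analysis
  have key : ∀ (u : ι → ℝ) (l : ℝ), S *ᵥ u = l • u → 0 < l →
      ∃ c : ℝ, ∀ i, u i = c * (s i * h i) := by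
    intro u l hu hl
    have hu0 : ∀ i, s i = 0 → u i = 0 := by
      intro i hi
      have h1 := congrFun hu i
      have h2 : (S *ᵥ u) i = 0 := by
        simp only [mulVec, dotProduct]
        refine Finset.sum_eq_zero fun j _ => ?_
        simp [hSdef, hz i (hs0 i hi)]
      rw [h2] at h1
      simp only [Pi.smul_apply, smul_eq_mul] at h1
      rcases mul_eq_zero.mp h1.symm with h | h
      · exact absurd h hl.ne'
      · exact h
    set y : ι → ℝ := fun i => u i / s i with hy
    have hsy : ∀ i, s i * y i = u i := by
      intro i
      by_cases hi : s i = 0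
      · rw [hi, hu0 i hi]; ring
      · simp only [hy]; field_simp
    have hMy : ∀ i, (M *ᵥ y) i = l * d i * y i := by
      intro i
      have h1 : (M *ᵥ y) i = s i * (S *ᵥ u) i := by
        simp only [mulVec, dotProduct, Finset.mul_sum]
        refine Finset.sum_congr rfl fun j _ => ?_
        rw [hSM i j, ← hsy j]; ring
      rw [h1, hu, Pi.smul_apply, smul_eq_mul, ← hsy i, ← hss i]; ring
    have hQ : y ⬝ᵥ M *ᵥ y = l * ∑ i, d i * y i ^ 2 := by
      simp only [dotProduct, hMy, Finset.mul_sum]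
      refine Finset.sum_congr rfl fun j _ => ?_
      ring
    have h1 := hpull y
    have h2 : ∑ i, h i * ((M *ᵥ y) i) ^ 2 / (M *ᵥ h) i = l ^ 2 * ∑ i, d i * y i ^ 2 := by
      rw [Finset.mul_sum]
      refine Finset.sum_congr rfl fun i _ => ?_
      rw [hMy]
      have hi := (hh i).ne'
      by_cases hdi : d i = 0
      · rw [hdi]; ring
      have h3 : (M *ᵥ h) i = d i * h i := by simp only [hd]; field_simp
      rw [h3]; field_simp
    have h3 := perron_id M hM h hh y
    have h4 : ∀ i j, 0 ≤ M i j * h i * h j * (y i / h i - y j / h j) ^ 2 := fun i j => by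
      have := hn i j; have := hh i; have := hh j; positivity
    set E := ∑ i, d i * y i ^ 2 with hE
    rw [hQ] at h3
    rw [hQ, h2] at h1
    have hE0 : 0 ≤ E := Finset.sum_nonneg fun i _ => mul_nonneg (hd0 i) (sq_nonneg _)
    have h5 : 0 ≤ ∑ i, ∑ j, M i j * h i * h j * (y i / h i - y j / h j) ^ 2 :=
      Finset.sum_nonneg fun i _ => Finset.sum_nonneg fun j _ => h4 i j
    have h6 : ∑ i, ∑ j, M i j * h i * h j * (y i / h i - y j / h j) ^ 2 = 0 := by
      refine le_antisymm ?_ h5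
      rw [h3]
      -- l (1-l) E ≤ 0 and (1-l)E ≥ 0
      rw [h3] at h5
      by_contra hc
      push Not at hc
      nlinarith [mul_pos hl hc]
    refine ⟨y o / h o, fun i => ?_⟩
    by_cases hi : M i o = 0
    · by_cases hio : i = o
      · subst hio
        have := (hh i).ne'
        rw [← hsy i]; field_simp
      · have h7 : s i = 0 := by
          have : (M *ᵥ h) i = 0 := by
            simp only [mulVec, dotProduct]
            exact Finset.sum_eq_zero fun j _ => by rw [hconn i hi hio j, zero_mul]
          simp only [hs, hd, this, zero_div, Real.sqrt_zero]
        rw [hu0 i h7, h7]; ring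
    · have h7 := (Finset.sum_eq_zero_iff_of_nonneg
        (fun i _ => Finset.sum_nonneg fun j _ => h4 i j)).mp h6 i (Finset.mem_univ i)
      have h8 := (Finset.sum_eq_zero_iff_of_nonneg (fun j _ => h4 i j)).mp h7 o (Finset.mem_univ o)
      have hi1 := (hh i).ne'
      have ho1 := (hh o).ne'
      have h9 : y i / h i - y o / h o = 0 := by
        simpa [hi, hi1, ho1] using h8
      have h10 : y i = y o / h o * h i := by
        rw [← sub_eq_zero.mp h9]; field_simp
      rw [← hsy i, h10]; ring
  set y : ι → ℝ := fun i => s i * v i with hy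
  have hQ : v ⬝ᵥ M *ᵥ v = y ⬝ᵥ S *ᵥ y := by
    simp only [mulVec, dotProduct, Finset.mul_sum]
    refine Finset.sum_congr rfl fun i _ => Finset.sum_congr rfl fun j _ => ?_
    rw [hSM i j]; simp only [hy]; ring
  rw [hQ]
  have hexp := OrthonormalBasis.sum_inner_mul_inner hS.eigenvectorBasis
    (WithLp.toLp 2 y) (WithLp.toLp 2 (S *ᵥ y))
  simp only [EuclideanSpace.inner_eq_star_dotProduct, star_trivial] at hexp
  rw [dotProduct_comm, ← hexp]
  refine Finset.sum_nonpos fun k _ => ?_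
  have hk := hS.mulVec_eigenvectorBasis k
  set u : ι → ℝ := (hS.eigenvectorBasis k).ofLp with hu
  have h1 : (S *ᵥ y) ⬝ᵥ u = hS.eigenvalues k * (y ⬝ᵥ u) := by
    rw [dotProduct_comm, form_symm S hSs, hk, dotProduct_smul, smul_eq_mul]
  rw [h1, dotProduct_comm u y]
  rcases le_or_gt (hS.eigenvalues k) 0 with hl | hl
  · nlinarith [mul_nonneg (neg_nonneg.mpr hl) (mul_self_nonneg (y ⬝ᵥ u))]
  · obtain ⟨c, hc⟩ := key u _ hk hl
    have : y ⬝ᵥ u = 0 := by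
      have h2 : y ⬝ᵥ u = c * (v ⬝ᵥ M *ᵥ h) := by
        simp only [dotProduct, Finset.mul_sum]
        refine Finset.sum_congr rfl fun i _ => ?_
        have h3 : (M *ᵥ h) i = d i * h i := by
          have := (hh i).ne'
          simp only [hd]; field_simp
        rw [h3, hc i, ← hss i]; simp only [hy]; ring
      rw [h2, hv, mul_zero]
    rw [this]; simp
end Generic

section Comb
open Matrix

/-- `x` may be appended to the set `I` of letters already used. -/
def cont (I : Finset X) (x : X) : Prop := x ∉ I ∧ ∀ y, y < x → y ∈ I

/-- Weight of a continuation (zero when it is not allowed). -/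
def cw (ω : X → ℝ) (I : Finset X) (x : X) : ℝ := if cont I x then ω x else 0

/-- Weighted number of continuations of length `m`. -/
def NN (ω : X → ℝ) : ℕ → Finset X → ℝ
  | 0, _ => 1
  | m + 1, I => ∑ x, cw ω I x * NN ω m (insert x I)

/-- The matrix of the combinatorial atlas. -/
def Cm (ω : X → ℝ) (m : ℕ) (I : Finset X) : Matrix (Option X) (Option X) ℝ
  | none, none => NN ω m I
  | some x, none => cw ω I x * NN ω m (insert x I)
  | none, some y => cw ω I y * NN ω m (insert y I)
  | some x, some y => if x = y then
      cw ω I x * ∑ z, (if cont I z then 0 else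
        cw ω (insert x I) z * NN ω m (insert z (insert x I)))
      else cw ω I x * (cw ω I y * NN ω m (insert y (insert x I)))

/-- The transfer map. -/
def Tx (I : Finset X) (x : X) (v : Option X → ℝ) : Option X → ℝ
  | none => v none
  | some y => if cont I y then v (some y) else v (some x)

/-- The `none` row of `Cm`. -/
def rr (ω : X → ℝ) (m : ℕ) (J : Finset X) (v : Option X → ℝ) : ℝ :=
  NN ω m J * v none + ∑ y, cw ω J y * NN ω m (insert y J) * v (some y)

/-- The distinguished vector. -/
def hv (t : ℝ) : Option X → ℝ
  | none => 1 - t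
  | some _ => t

lemma cont_mono {I : Finset X} {x y : X} (h : cont I y) (hxy : x ≠ y) : cont (insert x I) y :=
  ⟨by simp [h.1, hxy.symm], fun z hz => Finset.mem_insert_of_mem (h.2 z hz)⟩

lemma cont_inter {I : Finset X} {x y z : X} (hxy : x ≠ y) (h1 : cont (insert x I) z)
    (h2 : cont (insert y I) z) : cont I z := by
  refine ⟨fun h => h1.1 (Finset.mem_insert_of_mem h), fun u hu => ?_⟩
  have a := h1.2 u hu
  have b := h2.2 u hu
  rw [Finset.mem_insert] at a b
  rcases a with a | a
  · rcases b with b | b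
    · exact absurd (a.symm.trans b) hxy
    · exact b
  · exact a

lemma cw_self (ω : X → ℝ) (I : Finset X) (x : X) : cw ω (insert x I) x = 0 := by
  simp [cw, cont]

lemma cw_nonneg {ω : X → ℝ} (hω : ∀ x, 0 < ω x) (I : Finset X) (x : X) : 0 ≤ cw ω I x := by
  unfold cw; split_ifs
  · exact (hω x).le
  · exact le_rfl

lemma NN_nonneg {ω : X → ℝ} (hω : ∀ x, 0 < ω x) (m : ℕ) (I : Finset X) : 0 ≤ NN ω m I := by
  induction m generalizing I with
  | zero => simp [NN]
  | succ m ih => exact Finset.sum_nonneg fun x _ => mul_nonneg (cw_nonneg hω I x) (ih _)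

lemma NN_child_zero {ω : X → ℝ} (hω : ∀ x, 0 < ω x) (m : ℕ) (I : Finset X)
    (h : NN ω (m + 1) I = 0) (x : X) : cw ω I x * NN ω m (insert x I) = 0 :=
  (Finset.sum_eq_zero_iff_of_nonneg
    (fun x _ => mul_nonneg (cw_nonneg hω I x) (NN_nonneg hω m _))).mp h x (Finset.mem_univ x)

lemma NN_succ_zero {ω : X → ℝ} (hω : ∀ x, 0 < ω x) (m : ℕ) (I : Finset X)
    (h : NN ω m I = 0) : NN ω (m + 1) I = 0 := by
  induction m generalizing I with
  | zero => simp [NN] at h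
  | succ m ih =>
    refine Finset.sum_eq_zero fun x _ => ?_
    rcases mul_eq_zero.mp (NN_child_zero hω m I h x) with h1 | h1
    · rw [h1, zero_mul]
    · rw [ih _ h1, mul_zero]

lemma Cm_symm (ω : X → ℝ) (m : ℕ) (I : Finset X) (i j : Option X) :
    Cm ω m I i j = Cm ω m I j i := by
  rcases i with _ | x <;> rcases j with _ | y <;> simp only [Cm]
  by_cases h : x = y
  · subst h; rfl
  · rw [if_neg h, if_neg (Ne.symm h), Finset.insert_comm]; ring

lemma Cm_nonneg {ω : X → ℝ} (hω : ∀ x, 0 < ω x) (m : ℕ) (I : Finset X) (i j : Option X) :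
    0 ≤ Cm ω m I i j := by
  have h1 := fun I x => cw_nonneg hω I x
  have h2 := fun I => NN_nonneg hω m I
  rcases i with _ | x <;> rcases j with _ | y <;> simp only [Cm]
  · exact h2 _
  · exact mul_nonneg (h1 _ _) (h2 _)
  · exact mul_nonneg (h1 _ _) (h2 _)
  · split_ifs
    · refine mul_nonneg (h1 _ _) (Finset.sum_nonneg fun z _ => ?_)
      split_ifs
      · exact le_rfl
      · exact mul_nonneg (h1 _ _) (h2 _)
    · exact mul_nonneg (h1 _ _) (mul_nonneg (h1 _ _) (h2 _))

lemma Cm_none (ω : X → ℝ) (m : ℕ) (I : Finset X) (v : Option X → ℝ) :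
    (Cm ω m I *ᵥ v) none = rr ω m I v := by
  simp only [mulVec, dotProduct, Fintype.sum_option, Cm, rr]

lemma Cm_some (ω : X → ℝ) (m : ℕ) (I : Finset X) (v : Option X → ℝ) (x : X) :
    (Cm ω m I *ᵥ v) (some x) = cw ω I x * rr ω m (insert x I) (Tx I x v) := by
  simp only [mulVec, dotProduct, Fintype.sum_option, Cm, rr, Tx]
  have e : ∀ y, (if x = y then
      cw ω I x * ∑ z, (if cont I z then 0 else
        cw ω (insert x I) z * NN ω m (insert z (insert x I)))
      else cw ω I x * (cw ω I y * NN ω m (insert y (insert x I)))) * v (some y) =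
      cw ω I x * ((if x = y then (∑ z, (if cont I z then 0 else
        cw ω (insert x I) z * NN ω m (insert z (insert x I)))) * v (some x) else 0) +
        (if x = y then 0 else cw ω I y * NN ω m (insert y (insert x I)) * v (some y))) := by
    intro y
    split_ifs with h
    · subst h; ring
    · ring
  simp only [e]
  rw [← Finset.mul_sum, Finset.sum_add_distrib, Finset.sum_ite_eq, if_pos (Finset.mem_univ x),
    Finset.sum_mul, ← Finset.sum_add_distrib, mul_assoc, ← mul_add]
  congr 2
  refine Finset.sum_congr rfl fun z _ => ?_
  by_cases hz : cont I z
  · by_cases hxz : x = z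
    · subst hxz; simp [cw_self, hz]
    · have := cont_mono hz hxz
      simp [hz, hxz, cw, this]
  · simp [hz, cw]

lemma rr_hv (ω : X → ℝ) (m : ℕ) (J : Finset X) (t : ℝ) :
    rr ω m J (hv t) = t * NN ω (m + 1) J + (1 - t) * NN ω m J := by
  simp only [rr, hv, NN, ← Finset.sum_mul]; ring

lemma Tx_hv (I : Finset X) (x : X) (t : ℝ) : Tx I x (hv t) = hv t := by
  funext i; rcases i with _ | y <;> simp [Tx, hv]

lemma inh (ω : X → ℝ) (m : ℕ) (J : Finset X) (u : Option X → ℝ) (t : ℝ) :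
    t * rr ω (m + 1) J u + (1 - t) * rr ω m J u = u ⬝ᵥ Cm ω m J *ᵥ hv t := by
  simp only [dotProduct, Fintype.sum_option, Cm_none, Cm_some, Tx_hv, rr_hv]
  simp only [rr, mul_add, Finset.mul_sum]
  rw [add_add_add_comm, ← Finset.sum_add_distrib]
  congr 1
  · ring
  · refine Finset.sum_congr rfl fun y _ => ?_
    ring

lemma pull1 (ω : X → ℝ) (m : ℕ) (J : Finset X) (u : Option X → ℝ) :
    rr ω (m + 1) J u = ∑ x, cw ω J x * rr ω m (insert x J) (Tx J x u) := by
  have h := inh ω m J u 1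
  rw [form_symm _ (Cm_symm ω m J)] at h
  simp only [dotProduct, Fintype.sum_option, Cm_none, Cm_some, hv] at h
  simpa using h

lemma pull2 {ω : X → ℝ} (hω : ∀ x, 0 < ω x) (m : ℕ) (I : Finset X) (v : Option X → ℝ)
    (x y : X) (hx : cont I x) (hy : cont I y) (hxy : x ≠ y) :
    0 ≤ (v (some y) - v (some x)) *
      (rr ω m (insert y (insert x I)) (Tx (insert x I) y (Tx I x v)) -
       rr ω m (insert x (insert y I)) (Tx (insert y I) x (Tx I y v))) := by
  rw [Finset.insert_comm x y I]
  simp only [rr, Tx]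
  rw [add_sub_add_left_eq_sub, ← Finset.sum_sub_distrib, Finset.mul_sum]
  refine Finset.sum_nonneg fun z _ => ?_
  rw [← mul_sub]
  have hc := cw_nonneg hω (insert y (insert x I)) z
  have hN := NN_nonneg hω m (insert z (insert y (insert x I)))
  have hW := mul_nonneg hc hN
  set W := cw ω (insert y (insert x I)) z * NN ω m (insert z (insert y (insert x I)))
  simp only [hx, hy, if_true]
  by_cases h0 : cont I z
  · have hz : ∀ a b : ℝ, (a * (W * (b - b))) = 0 := fun a b => by ring
    by_cases hzx : x = z
    · subst hzx
      have : cw ω (insert y (insert x I)) x = 0 := by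
        rw [Finset.insert_comm]; exact cw_self _ _ _
      have hW0 : W = 0 := by simp only [W, this, zero_mul]
      rw [hW0]; simp
    by_cases hzy : y = z
    · subst hzy
      have hW0 : W = 0 := by simp only [W, cw_self, zero_mul]
      rw [hW0]; simp
    simp [h0, cont_mono h0 hzx, cont_mono h0 hzy]
  · by_cases h1 : cont (insert x I) z
    · have h2 : ¬ cont (insert y I) z := fun h2 => h0 (cont_inter hxy h1 h2)
      simp [h0, h1, h2]
    · by_cases h2 : cont (insert y I) z
      · simp [h0, h1, h2]
      · simp only [h0, h1, h2, if_false]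
        nlinarith [mul_nonneg hW (sq_nonneg (v (some y) - v (some x)))]

lemma pull {ω : X → ℝ} (hω : ∀ x, 0 < ω x) (m : ℕ) (I : Finset X) (v : Option X → ℝ) :
    v ⬝ᵥ Cm ω (m + 1) I *ᵥ v ≤
      ∑ x, cw ω I x * (Tx I x v ⬝ᵥ Cm ω m (insert x I) *ᵥ Tx I x v) := by
  simp only [dotProduct, Fintype.sum_option, Cm_none, Cm_some, mul_add, Finset.sum_add_distrib]
  have e0 : v none * rr ω (m + 1) I v =
      ∑ x, cw ω I x * (Tx I x v none * rr ω m (insert x I) (Tx I x v)) := by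
    rw [pull1, Finset.mul_sum]
    refine Finset.sum_congr rfl fun x _ => ?_
    simp only [Tx]; ring
  rw [e0]
  refine add_le_add le_rfl ?_
  set R : X → X → ℝ := fun x y =>
    rr ω m (insert y (insert x I)) (Tx (insert x I) y (Tx I x v)) with hR
  rw [← sub_nonneg, ← Finset.sum_sub_distrib]
  have e1 : ∀ x, cw ω I x * ∑ y, Tx I x v (some y) * (cw ω (insert x I) y * R x y) -
      v (some x) * (cw ω I x * rr ω (m + 1) (insert x I) (Tx I x v)) =
      ∑ y, (if x = y then 0 else cw ω I x * cw ω I y * (v (some y) - v (some x)) * R x y) := by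
    intro x
    rw [pull1, Finset.mul_sum, Finset.mul_sum, Finset.mul_sum, ← Finset.sum_sub_distrib]
    refine Finset.sum_congr rfl fun y _ => ?_
    have : rr ω m (insert y (insert x I)) (Tx (insert x I) y (Tx I x v)) = R x y := rfl
    rw [this]
    by_cases hxy : x = y
    · subst hxy; simp [cw_self]
    · by_cases hy : cont I y
      · have h2 := cont_mono hy hxy
        simp only [Tx, hy, h2, cw, if_true, hxy, if_false]; ring
      · simp only [Tx, hy, if_false, hxy, cw]; ring
  have e2 : ∑ x, (cw ω I x * ∑ y, Tx I x v (some y) * (cw ω (insert x I) y * R x y) -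
      v (some x) * (cw ω I x * rr ω (m + 1) (insert x I) (Tx I x v))) =
      ∑ x, ∑ y, (if x = y then 0 else
        cw ω I x * cw ω I y * (v (some y) - v (some x)) * R x y) :=
    Finset.sum_congr rfl fun x _ => e1 x
  show 0 ≤ ∑ x, (cw ω I x * ∑ y, Tx I x v (some y) * (cw ω (insert x I) y * R x y) -
      v (some x) * (cw ω I x * rr ω (m + 1) (insert x I) (Tx I x v)))
  rw [e2]
  set G := ∑ x, ∑ y, (if x = y then 0 else
        cw ω I x * cw ω I y * (v (some y) - v (some x)) * R x y) with hG
  have e3 : G = ∑ x, ∑ y, (if y = x then 0 else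
        cw ω I y * cw ω I x * (v (some x) - v (some y)) * R y x) := by
    rw [hG, Finset.sum_comm]
  have e4 : 0 ≤ G + G := by
    nth_rewrite 2 [e3]
    rw [hG, ← Finset.sum_add_distrib]
    refine Finset.sum_nonneg fun x _ => ?_
    rw [← Finset.sum_add_distrib]
    refine Finset.sum_nonneg fun y _ => ?_
    by_cases hxy : x = y
    · simp [hxy]
    · rw [if_neg hxy, if_neg (Ne.symm hxy)]
      by_cases hx : cont I x
      · by_cases hy : cont I y
        · have h := pull2 hω m I v x y hx hy hxy
          have h' : 0 ≤ (v (some y) - v (some x)) * (R x y - R y x) := h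
          have hc := mul_nonneg (mul_nonneg (cw_nonneg hω I x) (cw_nonneg hω I y)) h'
          nlinarith [hc]
        · simp [cw, hy]
      · simp [cw, hx]
  linarith

end Comb

section Step
open Matrix

lemma hyp_bound {ι : Type*} [Fintype ι] (M : Matrix ι ι ℝ)
    (hn : ∀ i j, 0 ≤ M i j) (h : ι → ℝ) (hh : ∀ i, 0 < h i) (H : Hyp M) (u : ι → ℝ) :
    u ⬝ᵥ M *ᵥ u ≤ (u ⬝ᵥ M *ᵥ h) ^ 2 / (h ⬝ᵥ M *ᵥ h) := by
  have hi : ∀ i, 0 ≤ (M *ᵥ h) i := fun i =>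
    Finset.sum_nonneg fun j _ => mul_nonneg (hn i j) (hh j).le
  have hb : 0 ≤ h ⬝ᵥ M *ᵥ h := Finset.sum_nonneg fun i _ => mul_nonneg (hh i).le (hi i)
  rcases hb.eq_or_lt with hb | hb
  · have h1 : ∀ i j, M i j = 0 := by
      intro i j
      have h2 := (Finset.sum_eq_zero_iff_of_nonneg
        (fun i _ => mul_nonneg (hh i).le (hi i))).mp hb.symm i (Finset.mem_univ i)
      have h3 : (M *ᵥ h) i = 0 := by
        rcases mul_eq_zero.mp h2 with h | h
        · exact absurd h (hh i).ne'
        · exact h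
      have h4 := (Finset.sum_eq_zero_iff_of_nonneg
        (fun j _ => mul_nonneg (hn i j) (hh j).le)).mp h3 j (Finset.mem_univ j)
      rcases mul_eq_zero.mp h4 with h | h
      · exact h
      · exact absurd h (hh j).ne'
    have h2 : u ⬝ᵥ M *ᵥ u = 0 := by simp [dotProduct, mulVec, h1]
    rw [h2, ← hb]; simp
  · rw [le_div_iff₀ hb]
    exact H u h hb

lemma row_zero {ω : X → ℝ} (hω : ∀ x, 0 < ω x) (m : ℕ) (I : Finset X) (x : X)
    (h : NN ω m (insert x I) = 0) (j : Option X) : Cm ω m I (some x) j = 0 := by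
  have h1 := NN_child_zero hω m _ (NN_succ_zero hω m _ h)
  rcases j with _ | y <;> simp only [Cm]
  · rw [h, mul_zero]
  · split_ifs with hxy
    · rw [Finset.sum_eq_zero, mul_zero]
      intro z _
      split_ifs
      · rfl
      · exact h1 z
    · by_cases hy : cont I y
      · have h2 := h1 y
        have h3 : cw ω I y = cw ω (insert x I) y := by
          simp [cw, hy, cont_mono hy hxy]
        rw [h3, h2, mul_zero]
      · simp [cw, hy]

lemma hyp_mix {ω : X → ℝ} (hω : ∀ x, 0 < ω x) (m : ℕ) (I : Finset X)
    (H0 : Hyp (Cm ω m I)) (H : ∀ x, cont I x → Hyp (Cm ω m (insert x I)))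
    (t : ℝ) (ht0 : 0 < t) (ht1 : t < 1) :
    Hyp (t • Cm ω (m + 1) I + (1 - t) • Cm ω m I) := by
  have hs : 0 < 1 - t := by linarith
  have hh : ∀ i : Option X, 0 < hv t i := by
    intro i; rcases i with _ | x
    · exact hs
    · exact ht0
  set M := t • Cm ω (m + 1) I + (1 - t) • Cm ω m I with hMdef
  have hM : ∀ i j, M i j = M j i := by
    intro i j
    simp only [hMdef, Matrix.add_apply, Matrix.smul_apply]
    rw [Cm_symm ω m I i j, Cm_symm ω (m + 1) I i j]
  have hMv : ∀ v, M *ᵥ v = t • (Cm ω (m + 1) I *ᵥ v) + (1 - t) • (Cm ω m I *ᵥ v) := by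
    intro v; rw [hMdef, add_mulVec, smul_mulVec, smul_mulVec]
  have hnone : ∀ v, (M *ᵥ v) none = v ⬝ᵥ Cm ω m I *ᵥ hv t := by
    intro v
    rw [hMv, ← inh]
    simp only [Pi.add_apply, Pi.smul_apply, smul_eq_mul, Cm_none]
  have hsome : ∀ v x, (M *ᵥ v) (some x) =
      cw ω I x * (Tx I x v ⬝ᵥ Cm ω m (insert x I) *ᵥ hv t) := by
    intro v x
    rw [hMv, ← inh]
    simp only [Pi.add_apply, Pi.smul_apply, smul_eq_mul, Cm_some]
    ring
  refine hyp_of_orth M hM (hv t) (orth_of_pull M hM ?_ (hv t) hh none ?_ ?_)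
  · intro i j
    have h1 := Cm_nonneg hω m I i j
    have h2 := Cm_nonneg hω (m + 1) I i j
    simp only [hMdef, Matrix.add_apply, Matrix.smul_apply, smul_eq_mul]
    positivity
  · intro i hi hne j
    rcases i with _ | x
    · exact absurd rfl hne
    by_cases hx : cont I x
    · have hc : 0 < cw ω I x := by simp [cw, hx, hω x]
      simp only [hMdef, Matrix.add_apply, Matrix.smul_apply, smul_eq_mul] at hi ⊢
      simp only [Cm] at hi
      have n1 := NN_nonneg hω m (insert x I)
      have n2 := NN_nonneg hω (m + 1) (insert x I)
      have hN : NN ω m (insert x I) = 0 := by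
        have a1 : 0 ≤ t * (cw ω I x * NN ω (m + 1) (insert x I)) := by positivity
        have a2 : 0 ≤ (1 - t) * (cw ω I x * NN ω m (insert x I)) := by positivity
        have a3 : (1 - t) * (cw ω I x * NN ω m (insert x I)) = 0 := by linarith
        simpa [hs.ne', hc.ne'] using a3
      have e1 := row_zero hω m I x hN j
      have e2 := row_zero hω (m + 1) I x (NN_succ_zero hω m _ hN) j
      rw [e1, e2]; simp
    · have hc : cw ω I x = 0 := by simp [cw, hx]
      simp only [hMdef, Matrix.add_apply, Matrix.smul_apply, smul_eq_mul]
      rcases j with _ | y <;> simp [Cm, hc]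
  · intro v
    have h1 : v ⬝ᵥ M *ᵥ v = t * (v ⬝ᵥ Cm ω (m + 1) I *ᵥ v) + (1 - t) * (v ⬝ᵥ Cm ω m I *ᵥ v) := by
      rw [hMv, dotProduct_add, dotProduct_smul, dotProduct_smul, smul_eq_mul, smul_eq_mul]
    have h2 := mul_le_mul_of_nonneg_left (pull hω m I v) ht0.le
    have h3 := mul_le_mul_of_nonneg_left
      (hyp_bound _ (Cm_nonneg hω m I) (hv t) hh H0 v) hs.le
    rw [Fintype.sum_option, hnone, hnone, h1, add_comm]
    refine add_le_add ?_ ?_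
    · rw [mul_div_assoc]; exact h3
    · refine h2.trans ?_
      rw [Finset.mul_sum]
      refine Finset.sum_le_sum fun x _ => ?_
      rw [hsome, hsome, Tx_hv]
      show t * _ ≤ t * _ / _
      by_cases hx : cont I x
      · have hc : 0 < cw ω I x := by simp [cw, hx, hω x]
        have h4 := hyp_bound _ (Cm_nonneg hω m (insert x I)) (hv t) hh (H x hx) (Tx I x v)
        have h5 : ∀ a b : ℝ, t * (cw ω I x * a) ^ 2 / (cw ω I x * b) =
            t * (cw ω I x * (a ^ 2 / b)) := by
          intro a b
          by_cases hb : b = 0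
          · simp [hb]
          · field_simp
        rw [h5]
        gcongr
      · have hc : cw ω I x = 0 := by simp [cw, hx]
        rw [hc]; simp

lemma hyp_step {ω : X → ℝ} (hω : ∀ x, 0 < ω x) (m : ℕ) (I : Finset X)
    (H0 : Hyp (Cm ω m I)) (H : ∀ x, cont I x → Hyp (Cm ω m (insert x I))) :
    Hyp (Cm ω (m + 1) I) := by
  intro v w hw
  have hq : ∀ (t : ℝ) (a b : Option X → ℝ),
      a ⬝ᵥ (t • Cm ω (m + 1) I + (1 - t) • Cm ω m I) *ᵥ b =
      t * (a ⬝ᵥ Cm ω (m + 1) I *ᵥ b) + (1 - t) * (a ⬝ᵥ Cm ω m I *ᵥ b) := by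
    intro t a b
    rw [add_mulVec, smul_mulVec, smul_mulVec, dotProduct_add, dotProduct_smul, dotProduct_smul,
      smul_eq_mul, smul_eq_mul]
  have hl : ∀ p q : ℝ, Filter.Tendsto (fun t : ℝ => t * p + (1 - t) * q)
      (nhdsWithin 1 (Set.Iio 1)) (nhds p) := by
    intro p q
    have hcont : Continuous (fun t : ℝ => t * p + (1 - t) * q) := by fun_prop
    have := hcont.tendsto 1
    simp only [one_mul, sub_self, zero_mul, add_zero] at this
    exact this.mono_left nhdsWithin_le_nhds
  refine le_of_tendsto_of_tendsto
    ((hl (v ⬝ᵥ Cm ω (m + 1) I *ᵥ v) (v ⬝ᵥ Cm ω m I *ᵥ v)).mul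
      (hl (w ⬝ᵥ Cm ω (m + 1) I *ᵥ w) (w ⬝ᵥ Cm ω m I *ᵥ w)))
    ((hl (v ⬝ᵥ Cm ω (m + 1) I *ᵥ w) (v ⬝ᵥ Cm ω m I *ᵥ w)).pow 2) ?_
  have e1 := (hl (w ⬝ᵥ Cm ω (m + 1) I *ᵥ w) (w ⬝ᵥ Cm ω m I *ᵥ w)).eventually (lt_mem_nhds hw)
  have e2 : ∀ᶠ t : ℝ in nhdsWithin 1 (Set.Iio 1), t ∈ Set.Ioo (0 : ℝ) 1 :=
    Ioo_mem_nhdsLT one_pos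
  filter_upwards [e1, e2] with t h1 h2
  have h3 := hyp_mix hω m I H0 H t h2.1 h2.2 v w
  rw [hq, hq, hq] at h3
  exact h3 h1

lemma hyp_base {ω : X → ℝ} (hω : ∀ x, 0 < ω x)
    (hCM : ∀ x : X, (∑ y ∈ covers x, ω y) ≤ ω x)
    (I : Finset X) (hI : ∀ x ∈ I, ∀ y, y < x → y ∈ I) : Hyp (Cm ω 0 I) := by
  set d : X → ℝ := fun x => ∑ z, (if cont I z then 0 else cw ω (insert x I) z) with hd
  set e : X → ℝ := fun x => cw ω I x * (cw ω I x - d x) with he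
  have he0 : ∀ x, 0 ≤ e x := by
    intro x
    by_cases hx : cont I x
    · have hc : cw ω I x = ω x := by simp [cw, hx]
      have h1 : d x ≤ ω x := by
        refine le_trans ?_ (hCM x)
        rw [covers, Finset.sum_filter]
        refine Finset.sum_le_sum fun z _ => ?_
        by_cases hz : cont I z
        · rw [if_pos hz]; split_ifs
          · exact (hω z).le
          · exact le_rfl
        · rw [if_neg hz]
          by_cases hz2 : cont (insert x I) z
          · have hcov : x ⋖ z := by
              have hzI : z ∉ I := fun h => hz2.1 (Finset.mem_insert_of_mem h)
              refine ⟨?_, ?_⟩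
              · by_contra hxz
                refine hz ⟨hzI, fun y hy => ?_⟩
                rcases Finset.mem_insert.mp (hz2.2 y hy) with h | h
                · exact absurd (h ▸ hy) hxz
                · exact h
              · intro y hxy hyz
                rcases Finset.mem_insert.mp (hz2.2 y hyz) with h | h
                · exact absurd h hxy.ne'
                · exact hx.1 (hI y h x hxy)
            simp [hcov, cw, hz2]
          · simp only [cw, hz2, if_false]
            split_ifs
            · exact (hω z).le
            · exact le_rfl
      simp only [he, hc]
      exact mul_nonneg (hω x).le (sub_nonneg.mpr h1)
    · simp [he, cw, hx]
  set L : (Option X → ℝ) → ℝ := fun v => v none + ∑ x, cw ω I x * v (some x) with hL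
  have hrow : ∀ v x, cw ω I x * rr ω 0 (insert x I) (Tx I x v) =
      cw ω I x * L v - e x * v (some x) := by
    intro v x
    rw [← Cm_some]
    simp only [mulVec, dotProduct, Fintype.sum_option, Cm, NN, hL, he, hd, mul_one]
    have : ∀ y, (if x = y then cw ω I x * ∑ z, (if cont I z then 0 else cw ω (insert x I) z)
        else cw ω I x * cw ω I y) * v (some y) =
        cw ω I x * (cw ω I y * v (some y)) -
        (if x = y then cw ω I x * (cw ω I x - ∑ z, (if cont I z then 0 else cw ω (insert x I) z))
          * v (some x) else 0) := by
      intro y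
      split_ifs with h
      · subst h; ring
      · ring
    simp only [this]
    rw [Finset.sum_sub_distrib, Finset.sum_ite_eq, if_pos (Finset.mem_univ x), ← Finset.mul_sum]
    ring
  have hB : ∀ v w, v ⬝ᵥ Cm ω 0 I *ᵥ w = L v * L w - ∑ x, e x * (v (some x) * w (some x)) := by
    intro v w
    have h0 : rr ω 0 I w = L w := by simp [rr, hL, NN]
    simp only [dotProduct, Fintype.sum_option, Cm_none, Cm_some, hrow, h0]
    have : ∀ x, v (some x) * (cw ω I x * L w - e x * w (some x)) =
        cw ω I x * v (some x) * L w - e x * (v (some x) * w (some x)) := fun x => by ring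
    simp only [this]
    rw [Finset.sum_sub_distrib, ← Finset.sum_mul]
    simp only [hL]; ring
  intro v w hw
  rw [hB] at hw
  rw [hB, hB, hB]
  set P := ∑ x, e x * (v (some x) * v (some x)) with hP
  set R := ∑ x, e x * (w (some x) * w (some x)) with hR
  set G := ∑ x, e x * (v (some x) * w (some x)) with hG
  have hquad : ∀ a b : ℝ, 0 ≤ a ^ 2 * P - 2 * a * b * G + b ^ 2 * R := by
    intro a b
    have : a ^ 2 * P - 2 * a * b * G + b ^ 2 * R =
        ∑ x, e x * (a * v (some x) - b * w (some x)) ^ 2 := by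
      simp only [hP, hG, hR, Finset.mul_sum]
      rw [← Finset.sum_sub_distrib, ← Finset.sum_add_distrib]
      exact Finset.sum_congr rfl fun x _ => by ring
    rw [this]
    exact Finset.sum_nonneg fun x _ => mul_nonneg (he0 x) (sq_nonneg _)
  have hR0 : 0 ≤ R := by have := hquad 0 1; linarith
  have hP0 : 0 ≤ P := by have := hquad 1 0; linarith
  have hPR : G ^ 2 ≤ P * R := by
    rcases hR0.eq_or_lt with h | h
    · by_contra hc
      rw [← h] at hc hquad
      have hG0 : 0 < G ^ 2 := by rw [mul_zero] at hc; exact not_le.mp hc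
      have := hquad 1 ((P + 1) / (2 * G))
      have hGn : G ≠ 0 := by rintro h; simp [h] at hG0
      have h5 : 2 * 1 * ((P + 1) / (2 * G)) * G = P + 1 := by field_simp
      rw [h5] at this
      linarith
    · have := hquad R G
      have h2 : 0 ≤ R * (P * R - G ^ 2) := by nlinarith
      have := nonneg_of_mul_nonneg_right h2 h
      linarith
  set a := L v
  set b := L w
  rcases hR0.eq_or_lt with h | h
  · have hG0 : G = 0 := by
      rw [← h, mul_zero] at hPR
      nlinarith [sq_nonneg G]
    rw [← h, hG0]
    nlinarith [mul_nonneg hP0 (sq_nonneg b)]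
  · have h1 : 0 ≤ (b * b - R) * (P * R - G ^ 2) := mul_nonneg hw.le (by linarith)
    have h2 : 0 ≤ R * ((a * b - G) ^ 2 - (a * a - P) * (b * b - R)) := by
      nlinarith [sq_nonneg (a * R - b * G)]
    have := nonneg_of_mul_nonneg_right h2 h
    linarith

lemma hyp_all {ω : X → ℝ} (hω : ∀ x, 0 < ω x)
    (hCM : ∀ x : X, (∑ y ∈ covers x, ω y) ≤ ω x) (m : ℕ)
    (I : Finset X) (hI : ∀ x ∈ I, ∀ y, y < x → y ∈ I) : Hyp (Cm ω m I) := by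
  induction m generalizing I with
  | zero => exact hyp_base hω hCM I hI
  | succ m ih =>
    refine hyp_step hω m I (ih I hI) fun x hx => ih _ ?_
    intro z hz y hy
    rcases Finset.mem_insert.mp hz with h | h
    · subst h; exact Finset.mem_insert_of_mem (hx.2 y hy)
    · exact Finset.mem_insert_of_mem (hI z h y hy)

lemma NN_logconcave {ω : X → ℝ} (hω : ∀ x, 0 < ω x)
    (hCM : ∀ x : X, (∑ y ∈ covers x, ω y) ≤ ω x) (m : ℕ) :
    NN ω m ∅ * NN ω (m + 2) ∅ ≤ NN ω (m + 1) ∅ ^ 2 := by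
  have H := hyp_all hω hCM m ∅ (by simp) (hv 1) (hv 0)
  simp only [← inh] at H
  have e0 : ∀ k, rr ω k ∅ (hv 0) = NN ω k ∅ := fun k => by rw [rr_hv]; ring
  have e1 : ∀ k, rr ω k ∅ (hv 1) = NN ω (k + 1) ∅ := fun k => by rw [rr_hv]; ring
  simp only [e0, e1] at H
  rcases (NN_nonneg hω m ∅).eq_or_lt with h | h
  · rw [← h, zero_mul]; positivity
  · have := H (by linarith)
    nlinarith [this]

/-- Words feasible after the letters of `I` have been used. -/
def FeasFrom (I : Finset X) (α : List X) : Prop :=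
  α.Nodup ∧ (∀ a ∈ α, a ∉ I) ∧
    ∀ (l₁ l₂ : List X) (x : X), α = l₁ ++ x :: l₂ → ∀ y : X, y < x → y ∈ l₁ ∨ y ∈ I

lemma feasFrom_cons (I : Finset X) (a : X) (α : List X) :
    FeasFrom I (a :: α) ↔ cont I a ∧ FeasFrom (insert a I) α := by
  constructor
  · rintro ⟨h1, h2, h3⟩
    rw [List.nodup_cons] at h1
    refine ⟨⟨h2 a (by simp), fun y hy => ?_⟩, h1.2, ?_, ?_⟩
    · simpa using h3 [] α a rfl y hy
    · intro b hb hbI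
      rcases Finset.mem_insert.mp hbI with h | h
      · exact h1.1 (h ▸ hb)
      · exact h2 b (List.mem_cons_of_mem _ hb) h
    · intro l₁ l₂ x hα y hy
      have := h3 (a :: l₁) l₂ x (by rw [hα]; rfl) y hy
      simp only [List.mem_cons, Finset.mem_insert] at this ⊢
      tauto
  · rintro ⟨h0, h1, h2, h3⟩
    refine ⟨List.nodup_cons.mpr ⟨fun h => h2 a h (Finset.mem_insert_self _ _), h1⟩, ?_, ?_⟩
    · intro b hb
      rcases List.mem_cons.mp hb with h | h
      · rw [h]; exact h0.1
      · exact fun hh => h2 b h (Finset.mem_insert_of_mem hh)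
    · intro l₁ l₂ x hα y hy
      rcases l₁ with _ | ⟨c, l₁⟩
      · simp only [List.nil_append, List.cons.injEq] at hα
        right; exact h0.2 y (hα.1 ▸ hy)
      · simp only [List.cons_append, List.cons.injEq] at hα
        have := h3 l₁ l₂ x hα.2 y hy
        rw [Finset.mem_insert] at this
        rw [List.mem_cons, ← hα.1]
        tauto

lemma NN_eq (ω : X → ℝ) (k : ℕ) (I : Finset X) :
    ∑ f : Fin k → X, (if FeasFrom I (List.ofFn f) then ((List.ofFn f).map ω).prod else 0) =
      NN ω k I := by
  induction k generalizing I with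
  | zero =>
    have : FeasFrom I [] := ⟨List.nodup_nil, by simp, by simp⟩
    simp [NN, this]
  | succ k ih =>
    rw [← (Fin.consEquiv (fun _ : Fin (k + 1) => X)).sum_comp, Fintype.sum_prod_type, NN]
    refine Finset.sum_congr rfl fun x _ => ?_
    rw [← ih, Finset.mul_sum]
    refine Finset.sum_congr rfl fun f _ => ?_
    have e : List.ofFn (Fin.consEquiv (fun _ : Fin (k + 1) => X) (x, f)) = x :: List.ofFn f := by
      simp [Fin.consEquiv, List.ofFn_succ]
    rw [e]
    simp only [feasFrom_cons, cw, List.map_cons, List.prod_cons]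
    by_cases h1 : cont I x <;> by_cases h2 : FeasFrom (insert x I) (List.ofFn f) <;> simp [h1, h2]

lemma Lw_eq (ω : X → ℝ) (k : ℕ) : Lw ω k = NN ω k ∅ := by
  rw [← NN_eq, Lw, Finset.sum_filter, wordsLen,
    Finset.sum_image (fun a _ b _ h => List.ofFn_injective h)]
  refine Finset.sum_congr rfl fun f _ => ?_
  have : FeasibleWord (List.ofFn f) ↔ FeasFrom ∅ (List.ofFn f) := by
    simp [FeasibleWord, FeasFrom]
  simp only [this]

end Step

/-- **Log-concavity for poset antimatroids.**  If the positive weight function satisfies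
the cover monotonicity property (CM), then `L_ω(k)² ≥ L_ω(k-1)·L_ω(k+1)`. -/
theorem poset_antimatroid_log_concavity
    (ω : X → ℝ) (hω : ∀ x, 0 < ω x)
    (hCM : ∀ x : X, (∑ y ∈ covers x, ω y) ≤ ω x)
    (k : ℕ) (hk1 : 1 ≤ k) (hk2 : k < Fintype.card X) :
    Lw ω (k - 1) * Lw ω (k + 1) ≤ (Lw ω k) ^ 2 := by
  obtain ⟨m, rfl⟩ : ∃ m, k = m + 1 := ⟨k - 1, by omega⟩
  rw [Lw_eq, Lw_eq, Lw_eq]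
  exact NN_logconcave hω hCM m
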